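/- arXiv:2305.09896 — 4 statements merged into one kernel-verified Lean document; each statement's English description precedes it below -/
import Mathlib

section
/- Let (Ω, 𝔉, μ) be a probability space, let τ > 0, let h ∈ ℝ^d be a fixed vector, and let g : Ω → ℝ^d be a measurable random vector with ∫ ‖g(ω) − h‖₂² dμ(ω) ≤ s² for some s ≥ 0. Then ∫ ‖Clip_τ(g(ω)) − Clip_τ(h)‖₂ dμ(ω) ≤ 2s. -/
open MeasureTheory

/-!
Write `a` and `b` for the clipping factors of `x` and `y`. In the splitting
`a • x - b • y = a • (x - y) + (a - b) • y` each summand has norm at most `‖x - y‖`: the factor `a`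
is at most `1`, and `|a - b| * ‖y‖` is at most `|‖x‖ - ‖y‖|`. Smooth clipping is therefore
`2`-Lipschitz, and since the variance of `‖g - h‖` is nonnegative, the mean of `‖g - h‖` is at most
its root mean square.
-/

section SmoothClip

variable {E : Type*} [SeminormedAddCommGroup E] [NormedSpace ℝ E] {τ : ℝ}

/-- The smooth clipping operator `Clip_τ` on a real normed space; it maps into the ball of radius
`τ` when `0 < τ`. -/
noncomputable def smoothClip (τ : ℝ) (x : E) : E :=
  (τ / (τ + ‖x‖)) • x

theorem abs_div_add_sub_div_add_mul_le (hτ : 0 < τ) {r t : ℝ} (hr : 0 ≤ r) (ht : 0 ≤ t) :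
    |τ / (τ + r) - τ / (τ + t)| * t ≤ |r - t| := by
  have factor_diff :
      τ / (τ + r) - τ / (τ + t) = τ / (τ + r) * (1 / (τ + t)) * (t - r) := by
    field_simp
    ring
  have left_le_one : τ / (τ + r) ≤ 1 := div_le_one_of_le₀ (by linarith) (by positivity)
  have right_le_one : t / (τ + t) ≤ 1 := div_le_one_of_le₀ (by linarith) (by positivity)
  calc |τ / (τ + r) - τ / (τ + t)| * t
      = τ / (τ + r) * (t / (τ + t)) * |r - t| := by
        rw [factor_diff, abs_mul, abs_of_nonneg (by positivity), abs_sub_comm t r]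
        ring
    _ ≤ |r - t| :=
        mul_le_of_le_one_left (abs_nonneg _) (mul_le_one₀ left_le_one (by positivity) right_le_one)

theorem norm_smoothClip_sub_le (hτ : 0 < τ) (x y : E) :
    ‖smoothClip τ x - smoothClip τ y‖ ≤ 2 * ‖x - y‖ := by
  set a := τ / (τ + ‖x‖)
  set b := τ / (τ + ‖y‖)
  have abs_a_le_one : |a| ≤ 1 := by
    rw [abs_of_nonneg (by positivity)]
    exact div_le_one_of_le₀ (by linarith [norm_nonneg x]) (by positivity)
  have factor_variation : |a - b| * ‖y‖ ≤ ‖x - y‖ :=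
    (abs_div_add_sub_div_add_mul_le hτ (norm_nonneg x) (norm_nonneg y)).trans
      (abs_norm_sub_norm_le x y)
  calc ‖smoothClip τ x - smoothClip τ y‖
      = ‖a • (x - y) + (a - b) • y‖ := by
        rw [smul_sub, sub_smul, sub_add_sub_cancel, smoothClip, smoothClip]
    _ ≤ |a| * ‖x - y‖ + |a - b| * ‖y‖ := by
        simpa only [norm_smul, Real.norm_eq_abs] using norm_add_le (a • (x - y)) ((a - b) • y)
    _ ≤ 1 * ‖x - y‖ + ‖x - y‖ := by gcongr
    _ = 2 * ‖x - y‖ := by ring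

theorem lipschitzWith_smoothClip (hτ : 0 < τ) : LipschitzWith 2 (smoothClip τ : E → E) :=
  .of_dist_le_mul fun x y => by
    simpa only [dist_eq_norm, NNReal.coe_ofNat] using norm_smoothClip_sub_le hτ x y

end SmoothClip

section MeanDistance

variable {Ω : Type*} [MeasurableSpace Ω] {μ : Measure Ω} [IsProbabilityMeasure μ]
  {E : Type*} [NormedAddCommGroup E]

theorem integral_norm_le_sqrt_integral_sq_norm {X : Ω → E} (hX : MemLp X 2 μ) :
    ∫ ω, ‖X ω‖ ∂μ ≤ √(∫ ω, ‖X ω‖ ^ 2 ∂μ) := by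
  have variance_eq : ProbabilityTheory.variance (fun ω => ‖X ω‖) μ
      = ∫ ω, ‖X ω‖ ^ 2 ∂μ - (∫ ω, ‖X ω‖ ∂μ) ^ 2 :=
    ProbabilityTheory.variance_eq_sub hX.norm
  exact Real.le_sqrt_of_sq_le <|
    sub_nonneg.1 (variance_eq ▸ ProbabilityTheory.variance_nonneg _ μ)

theorem integral_norm_comp_sub_le_of_lipschitzWith {F : Type*} [SeminormedAddCommGroup F]
    {K : NNReal} {f : E → F} (hf : LipschitzWith K f) {g : Ω → E} {h : E}
    (hg : MemLp (fun ω => g ω - h) 2 μ) :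
    ∫ ω, ‖f (g ω) - f h‖ ∂μ ≤ K * √(∫ ω, ‖g ω - h‖ ^ 2 ∂μ) := by
  have integrable_dist : Integrable (fun ω => ‖g ω - h‖) μ := (hg.integrable one_le_two).norm
  calc ∫ ω, ‖f (g ω) - f h‖ ∂μ
      ≤ ∫ ω, K * ‖g ω - h‖ ∂μ :=
        integral_mono_of_nonneg (.of_forall fun _ => norm_nonneg _)
          (integrable_dist.const_mul _) (.of_forall fun ω => hf.norm_sub_le (g ω) h)
    _ = K * ∫ ω, ‖g ω - h‖ ∂μ := integral_const_mul _ _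
    _ ≤ K * √(∫ ω, ‖g ω - h‖ ^ 2 ∂μ) := by
        gcongr
        exact integral_norm_le_sqrt_integral_sq_norm hg

theorem expected_clipping_error_general [NormedSpace ℝ E] {τ : ℝ} (hτ : 0 < τ) {g : Ω → E} {h : E}
    (hg : MemLp (fun ω => g ω - h) 2 μ) :
    ∫ ω, ‖smoothClip τ (g ω) - smoothClip τ h‖ ∂μ ≤ 2 * √(∫ ω, ‖g ω - h‖ ^ 2 ∂μ) :=
  integral_norm_comp_sub_le_of_lipschitzWith (lipschitzWith_smoothClip hτ) hg

end MeanDistance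

/-- Expected clipping error.
Let `(Ω, 𝔉, μ)` be a probability space, `τ > 0`, `h ∈ ℝ^d` a fixed vector, and
`g : Ω → ℝ^d` a measurable random vector with `∫ ‖g − h‖₂² dμ ≤ s²` for some
`s ≥ 0`. Then `∫ ‖Clip_τ(g) − Clip_τ(h)‖₂ dμ ≤ 2 s`, where
`Clip_τ(x) = (τ/(τ+‖x‖₂)) x`. -/
theorem expected_clipping_error
    {Ω : Type*} [MeasurableSpace Ω] (μ : Measure Ω) [IsProbabilityMeasure μ]
    {d : ℕ} (τ : ℝ) (hτ : 0 < τ) (h : EuclideanSpace ℝ (Fin d))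
    (g : Ω → EuclideanSpace ℝ (Fin d)) (hg : Measurable g)
    (s : ℝ) (hs : 0 ≤ s)
    (hint : Integrable (fun ω => ‖g ω - h‖ ^ 2) μ)
    (hvar : ∫ ω, ‖g ω - h‖ ^ 2 ∂μ ≤ s ^ 2) :
    ∫ ω, ‖(τ / (τ + ‖g ω‖)) • g ω - (τ / (τ + ‖h‖)) • h‖ ∂μ ≤ 2 * s := by
  have memLp_dist : MemLp (fun ω => g ω - h) 2 μ :=
    (memLp_two_iff_integrable_sq_norm (hg.sub_const h).aestronglyMeasurable).2 hint
  have rms_le : √(∫ ω, ‖g ω - h‖ ^ 2 ∂μ) ≤ s := Real.sqrt_le_iff.2 ⟨hs, hvar⟩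
  exact (expected_clipping_error_general hτ memLp_dist).trans (by gcongr)
end

section
/- Let f₁, …, f_n : ℝ^d → ℝ be differentiable functions whose gradients are L-Lipschitz, let f = (1/n) Σᵢ fᵢ, and suppose the bounded gradient dissimilarity condition ‖∇f(x) − ∇fᵢ(x)‖₂ ≤ (1/12)‖∇f(x)‖₂ holds for all x ∈ ℝ^d and all i. Let τ > 0, let x₁, …, x_n ∈ ℝ^d, let x̄ = (1/n) Σᵢ xᵢ, and set δ = τ/(τ + ‖∇f(x̄)‖₂). Then (1/n) Σᵢ ‖(τ/(τ + ‖∇fᵢ(xᵢ)‖₂) − τ/(τ + ‖∇f(x̄)‖₂)) ∇fᵢ(xᵢ)‖₂ ≤ (δ L/√n) · (Σᵢ ‖xᵢ − x̄‖₂²)^{1/2} + (1/12) ‖∇f(x̄)‖₂. -/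
/- Since `τ/(τ + ‖u‖) - τ/(τ + ‖v‖) = δ (‖v‖ - ‖u‖)/(τ + ‖u‖)` with `δ = τ/(τ + ‖v‖)`, and
`‖u‖/(τ + ‖u‖) ≤ 1`, replacing the clipping scale of `u` by that of `v` moves the clipped vector
by at most `δ ‖u - v‖`. For `u = ∇fᵢ(xᵢ)` and `v = ∇F(x̄)` this distance splits at `∇fᵢ(x̄)` into a
Lipschitz term and a dissimilarity term; the Lipschitz terms are averaged by Cauchy–Schwarz. -/

section ClipScale

variable {E : Type*} [SeminormedAddCommGroup E] {τ : ℝ}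

/-- The factor by which smooth clipping with threshold `τ` rescales `v`: the clipped vector
`clipScale τ v • v` has norm less than `τ` when `0 < τ`. -/
noncomputable def clipScale (τ : ℝ) (v : E) : ℝ :=
  τ / (τ + ‖v‖)

theorem clipScale_nonneg (hτ : 0 ≤ τ) (v : E) : 0 ≤ clipScale τ v := by
  unfold clipScale
  positivity

theorem clipScale_le_one (hτ : 0 ≤ τ) (v : E) : clipScale τ v ≤ 1 :=
  div_le_one_of_le₀ (le_add_of_nonneg_right (norm_nonneg v)) (by positivity)

theorem clipScale_sub_clipScale (hτ : 0 < τ) (u v : E) :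
    clipScale τ u - clipScale τ v = clipScale τ v * ((‖v‖ - ‖u‖) / (τ + ‖u‖)) := by
  have hu : τ + ‖u‖ ≠ 0 := by positivity
  have hv : τ + ‖v‖ ≠ 0 := by positivity
  unfold clipScale
  field_simp
  ring

theorem norm_clipScale_sub_clipScale_smul_le [NormedSpace ℝ E] (hτ : 0 < τ) (u v : E) :
    ‖(clipScale τ u - clipScale τ v) • u‖ ≤ clipScale τ v * ‖u - v‖ := by
  have hscale : 0 ≤ clipScale τ v := clipScale_nonneg hτ.le v
  have hden : 0 < τ + ‖u‖ := by positivity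
  have hratio : ‖u‖ / (τ + ‖u‖) ≤ 1 :=
    div_le_one_of_le₀ (le_add_of_nonneg_left hτ.le) hden.le
  calc
    ‖(clipScale τ u - clipScale τ v) • u‖
        = clipScale τ v * (|‖u‖ - ‖v‖| * (‖u‖ / (τ + ‖u‖))) := by
      rw [norm_smul, Real.norm_eq_abs, clipScale_sub_clipScale hτ, abs_mul, abs_div,
        abs_of_nonneg hscale, abs_of_pos hden, abs_sub_comm]
      ring
    _ ≤ clipScale τ v * |‖u‖ - ‖v‖| := by
      gcongr
      exact mul_le_of_le_one_right (abs_nonneg _) hratio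
    _ ≤ clipScale τ v * ‖u - v‖ := by
      gcongr
      exact abs_norm_sub_norm_le u v

end ClipScale

theorem inv_card_mul_sum_le_sqrt_sum_sq_div_sqrt_card {ι : Type*} [Fintype ι] (a : ι → ℝ) :
    (Fintype.card ι : ℝ)⁻¹ * ∑ i, a i ≤ √(∑ i, a i ^ 2) / √(Fintype.card ι) := by
  rw [← Real.sqrt_div (by positivity), inv_mul_eq_div]
  exact Real.le_sqrt_of_sq_le (sum_div_card_sq_le_sum_sq_div_card)

theorem clipping_dissimilarity_bound_general {ι X E : Type*} [Fintype ι] [Nonempty ι]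
    [PseudoMetricSpace X] [SeminormedAddCommGroup E] [NormedSpace ℝ E]
    {L τ c : ℝ} (hL : 0 ≤ L) (hτ : 0 < τ) (g : ι → X → E) (v : E) (x : ι → X) (y : X)
    (hlip : ∀ i, ‖g i (x i) - g i y‖ ≤ L * dist (x i) y)
    (hdissim : ∀ i, ‖v - g i y‖ ≤ c * ‖v‖) :
    (Fintype.card ι : ℝ)⁻¹ * ∑ i, ‖(clipScale τ (g i (x i)) - clipScale τ v) • g i (x i)‖
      ≤ clipScale τ v * L / √(Fintype.card ι) * √(∑ i, dist (x i) y ^ 2)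
        + clipScale τ v * (c * ‖v‖) := by
  have hscale : 0 ≤ clipScale τ v := clipScale_nonneg hτ.le v
  have hdist (i : ι) : ‖g i (x i) - v‖ ≤ L * dist (x i) y + c * ‖v‖ :=
    calc
      ‖g i (x i) - v‖ ≤ ‖g i (x i) - g i y‖ + ‖g i y - v‖ := norm_sub_le_norm_sub_add_norm_sub ..
      _ ≤ L * dist (x i) y + c * ‖v‖ :=
        add_le_add (hlip i) ((norm_sub_rev _ _).trans_le (hdissim i))
  calc
    (Fintype.card ι : ℝ)⁻¹ * ∑ i, ‖(clipScale τ (g i (x i)) - clipScale τ v) • g i (x i)‖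
        ≤ (Fintype.card ι : ℝ)⁻¹ * ∑ i, clipScale τ v * (L * dist (x i) y + c * ‖v‖) := by
      gcongr with i
      exact (norm_clipScale_sub_clipScale_smul_le hτ _ _).trans
        (mul_le_mul_of_nonneg_left (hdist i) hscale)
    _ = clipScale τ v * L * ((Fintype.card ι : ℝ)⁻¹ * ∑ i, dist (x i) y)
          + clipScale τ v * (c * ‖v‖) := by
      simp only [← Finset.mul_sum, Finset.sum_add_distrib, Finset.sum_const, Finset.card_univ,
        nsmul_eq_mul]
      field_simp
    _ ≤ clipScale τ v * L * (√(∑ i, dist (x i) y ^ 2) / √(Fintype.card ι))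
          + clipScale τ v * (c * ‖v‖) := by
      gcongr
      exact inv_card_mul_sum_le_sqrt_sum_sq_div_sqrt_card _
    _ = clipScale τ v * L / √(Fintype.card ι) * √(∑ i, dist (x i) y ^ 2)
          + clipScale τ v * (c * ‖v‖) := by
      ring

/-- Clipping-scale dissimilarity bound.
Let `f₁, …, f_n : ℝ^d → ℝ` be differentiable with `L`-Lipschitz gradients,
`F = (1/n) Σᵢ fᵢ`, and suppose `‖∇F(x) − ∇fᵢ(x)‖ ≤ (1/12) ‖∇F(x)‖` for all
`x` and `i`. For `τ > 0`, points `x₁, …, x_n` with average `x̄`, and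
`δ = τ/(τ + ‖∇F(x̄)‖)`,
`(1/n) Σᵢ ‖(τ/(τ+‖∇fᵢ(xᵢ)‖) − τ/(τ+‖∇F(x̄)‖)) ∇fᵢ(xᵢ)‖
   ≤ (δL/√n) (Σᵢ ‖xᵢ − x̄‖²)^{1/2} + (1/12) ‖∇F(x̄)‖`. -/
theorem clipping_dissimilarity_bound {d n : ℕ} (hn : 0 < n)
    (L τ : ℝ) (hL : 0 ≤ L) (hτ : 0 < τ)
    (f : Fin n → EuclideanSpace ℝ (Fin d) → ℝ)
    (hdiff : ∀ i, Differentiable ℝ (f i))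
    (hlip : ∀ i x y, ‖gradient (f i) x - gradient (f i) y‖ ≤ L * ‖x - y‖)
    (F : EuclideanSpace ℝ (Fin d) → ℝ)
    (hF : F = fun x => (n : ℝ)⁻¹ * ∑ i, f i x)
    (hdissim : ∀ x i, ‖gradient F x - gradient (f i) x‖ ≤ (1 / 12) * ‖gradient F x‖)
    (x : Fin n → EuclideanSpace ℝ (Fin d))
    (xbar : EuclideanSpace ℝ (Fin d)) (hxbar : xbar = (n : ℝ)⁻¹ • ∑ i, x i)
    (δ : ℝ) (hδ : δ = τ / (τ + ‖gradient F xbar‖)) :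
    (n : ℝ)⁻¹ * ∑ i, ‖(τ / (τ + ‖gradient (f i) (x i)‖)
          - τ / (τ + ‖gradient F xbar‖)) • gradient (f i) (x i)‖
      ≤ δ * L / Real.sqrt n * Real.sqrt (∑ i, ‖x i - xbar‖ ^ 2)
        + (1 / 12) * ‖gradient F xbar‖ := by
  have : NeZero n := ⟨hn.ne'⟩
  have hbound := clipping_dissimilarity_bound_general hL hτ (fun i ↦ gradient (f i))
    (gradient F xbar) x xbar (by simpa only [dist_eq_norm] using fun i ↦ hlip i (x i) xbar)
    (hdissim xbar)
  simp only [Fintype.card_fin, dist_eq_norm, clipScale, ← hδ] at hbound ⊢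
  refine hbound.trans (add_le_add_right (mul_le_of_le_one_left (by positivity) ?_) _)
  exact hδ.trans_le (clipScale_le_one hτ.le _)
end

section
/- Let (Ω, 𝔉, μ) be a probability space, let X : Ω → [0, ∞) be an integrable nonnegative random variable, and let τ > 0 and ν > 0 with E[X] ≥ ν. Then E[τ X² / (τ + X)] ≥ τ (E[X])² / (τ + E[X]) ≥ (τ ν / (τ + ν)) · E[X]. In particular, if τ = ν, then E[τ X² / (τ + X)] ≥ (ν/2) E[X]. -/
open MeasureTheory

/-! On `x > -τ` the identities `τ x² / (τ + x) = τ (x - τ) + τ³ / (τ + x)` and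
`τ x / (τ + x) = τ - τ² / (τ + x)` show that the first function is convex and the second is
monotone. Jensen's inequality for the first bounds `E[τ X² / (τ + X)]` below by its value at
`m = E[X]`, and that value is `m` times the second function at `m`. -/

section OrderedField

variable {𝕜 : Type*} [Field 𝕜] [LinearOrder 𝕜] [IsStrictOrderedRing 𝕜]

lemma convexOn_mul_sq_div_add {τ : 𝕜} (hτ : 0 ≤ τ) :
    ConvexOn 𝕜 (Set.Ioi (-τ)) fun x ↦ τ * x ^ 2 / (τ + x) := by
  have h_inv : ConvexOn 𝕜 (Set.Ioi (-τ)) fun x ↦ (τ + x)⁻¹ := by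
    simpa [Function.comp_def] using (convexOn_zpow (𝕜 := 𝕜) (-1)).translate_right τ
  have h_affine : ConvexOn 𝕜 (Set.Ioi (-τ)) fun x ↦ τ * (x - τ) :=
    ((convexOn_id (convex_Ioi _)).sub (concaveOn_const τ (convex_Ioi _))).smul hτ
  refine (h_affine.add (h_inv.smul (pow_nonneg hτ 3))).congr fun x hx ↦ ?_
  have h_ne : τ + x ≠ 0 := (neg_lt_iff_pos_add'.mp hx).ne'
  simp only [Pi.add_apply, smul_eq_mul]
  field_simp
  ring

lemma monotoneOn_mul_div_add (τ : 𝕜) :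
    MonotoneOn (fun x ↦ τ * x / (τ + x)) (Set.Ioi (-τ)) := by
  have h_eq : ∀ x ∈ Set.Ioi (-τ), τ * x / (τ + x) = τ - τ ^ 2 / (τ + x) := fun x hx ↦ by
    have h_ne : τ + x ≠ 0 := (neg_lt_iff_pos_add'.mp hx).ne'
    field_simp
    ring
  intro x hx y hy hxy
  have h_pos : 0 < τ + x := neg_lt_iff_pos_add'.mp hx
  simp only [h_eq x hx, h_eq y hy]
  gcongr

lemma mul_sq_div_add_le_mul {τ x : 𝕜} (hτ : 0 ≤ τ) (hx : 0 ≤ x) :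
    τ * x ^ 2 / (τ + x) ≤ τ * x := by
  refine div_le_of_le_mul₀ (by positivity) (by positivity) ?_
  calc τ * x ^ 2 = τ * x * x := by ring
    _ ≤ τ * x * (τ + x) := by gcongr; exact le_add_of_nonneg_left hτ

end OrderedField

section Integral

variable {Ω : Type*} [MeasurableSpace Ω] {μ : Measure Ω} {X : Ω → ℝ} {τ : ℝ}

lemma integrable_mul_sq_div_add (hX : Integrable X μ) (hX0 : 0 ≤ᵐ[μ] X) (hτ : 0 ≤ τ) :
    Integrable (fun ω ↦ τ * X ω ^ 2 / (τ + X ω)) μ := by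
  have h_meas : AEMeasurable (fun ω ↦ τ * X ω ^ 2 / (τ + X ω)) μ :=
    ((hX.aemeasurable.pow_const 2).const_mul τ).div (hX.aemeasurable.const_add τ)
  refine (hX.const_mul τ).mono' h_meas.aestronglyMeasurable ?_
  filter_upwards [hX0] with ω (hω : 0 ≤ X ω)
  rw [Real.norm_of_nonneg (by positivity)]
  exact mul_sq_div_add_le_mul hτ hω

lemma mul_sq_integral_div_add_le_integral [IsProbabilityMeasure μ]
    (hX : Integrable X μ) (hX0 : 0 ≤ᵐ[μ] X) (hτ : 0 < τ) :
    τ * (∫ ω, X ω ∂μ) ^ 2 / (τ + ∫ ω, X ω ∂μ) ≤ ∫ ω, τ * X ω ^ 2 / (τ + X ω) ∂μ := by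
  have h_subset : Set.Ici 0 ⊆ Set.Ioi (-τ) := Set.Ici_subset_Ioi.mpr (neg_lt_zero.mpr hτ)
  have h_convex : ConvexOn ℝ (Set.Ici 0) fun x ↦ τ * x ^ 2 / (τ + x) :=
    (convexOn_mul_sq_div_add hτ.le).subset h_subset (convex_Ici 0)
  have h_cont : ContinuousOn (fun x ↦ τ * x ^ 2 / (τ + x)) (Set.Ici 0) :=
    ContinuousOn.div (by fun_prop) (by fun_prop) fun _ hx ↦ (add_pos_of_pos_of_nonneg hτ hx).ne'
  exact h_convex.map_integral_le h_cont isClosed_Ici hX0 hX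
    (integrable_mul_sq_div_add hX hX0 hτ.le)

end Integral

/-- Jensen bound for the clipped second moment.
Let `X ≥ 0` be an integrable random variable on a probability space, `τ > 0`,
`ν > 0` and `E[X] ≥ ν`. Then
`E[τ X²/(τ + X)] ≥ τ (E[X])²/(τ + E[X]) ≥ (τν/(τ+ν)) E[X]`;
in particular if `τ = ν` then `E[τ X²/(τ + X)] ≥ (ν/2) E[X]`. -/
theorem clipped_second_moment_bound
    {Ω : Type*} [MeasurableSpace Ω] (μ : Measure Ω) [IsProbabilityMeasure μ]
    (X : Ω → ℝ) (hX : Integrable X μ) (hX0 : ∀ ω, 0 ≤ X ω)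
    (τ ν : ℝ) (hτ : 0 < τ) (hν : 0 < ν) (hEX : ν ≤ ∫ ω, X ω ∂μ) :
    (τ * (∫ ω, X ω ∂μ) ^ 2 / (τ + ∫ ω, X ω ∂μ)
        ≤ ∫ ω, τ * X ω ^ 2 / (τ + X ω) ∂μ) ∧
    (τ * ν / (τ + ν)) * (∫ ω, X ω ∂μ)
        ≤ τ * (∫ ω, X ω ∂μ) ^ 2 / (τ + ∫ ω, X ω ∂μ) ∧
    (τ = ν → (ν / 2) * (∫ ω, X ω ∂μ) ≤ ∫ ω, τ * X ω ^ 2 / (τ + X ω) ∂μ) := by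
  set m := ∫ ω, X ω ∂μ
  have hm : 0 < m := hν.trans_le hEX
  have h_jensen : τ * m ^ 2 / (τ + m) ≤ ∫ ω, τ * X ω ^ 2 / (τ + X ω) ∂μ :=
    mul_sq_integral_div_add_le_integral hX (ae_of_all μ hX0) hτ
  have h_mono : τ * ν / (τ + ν) ≤ τ * m / (τ + m) :=
    have h_neg : -τ < 0 := neg_lt_zero.mpr hτ
    monotoneOn_mul_div_add τ (h_neg.trans hν) (h_neg.trans hm) hEX
  have h_lower : τ * ν / (τ + ν) * m ≤ τ * m ^ 2 / (τ + m) :=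
    calc τ * ν / (τ + ν) * m ≤ τ * m / (τ + m) * m := by gcongr
      _ = τ * m ^ 2 / (τ + m) := by ring
  refine ⟨h_jensen, h_lower, ?_⟩
  rintro rfl
  calc τ / 2 * m = τ * τ / (τ + τ) * m := by rw [← two_mul, mul_div_mul_right _ _ hτ.ne']
    _ ≤ τ * m ^ 2 / (τ + m) := h_lower
    _ ≤ ∫ ω, τ * X ω ^ 2 / (τ + X ω) ∂μ := h_jensen
end

section
/- Let m ∈ ℕ, let G ∈ ℝ^{m×m} have nonnegative entries, and suppose I_m − G is invertible with (I_m − G)^{-1} having nonnegative entries. Let e, b : ℕ → ℝ^m be sequences of vectors with nonnegative entries such that e(0) = 0 and e(t+1) ≤ G e(t) + b(t) entrywise for all t ≥ 0. Then for every T ≥ 1, Σ_{t=1}^T e(t) ≤ (I_m − G)^{-1} Σ_{t=0}^{T−1} b(t) entrywise. -/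
open Matrix Finset

/-!
The sum `S = ∑ t ≤ T, e t` is a subsolution of a fixed-point equation: summing the recursion
gives `S ≤ e 0 + G (S - e T) + B` with `B = ∑ t < T, b t`. Since `G` is monotone and `0 ≤ e T`, this
is at most `e 0 + G S + B`, so `(1 - G) S ≤ e 0 + B`, and the monotone matrix `(1 - G)⁻¹` can be
applied to both sides.
-/

theorem sum_range_succ_le_of_succ_le_map_add {E : Type*} [AddCommMonoid E] [PartialOrder E]
    [IsOrderedAddMonoid E] (A : E →+ E) {e b : ℕ → E} {T : ℕ}
    (hrec : ∀ t < T, e (t + 1) ≤ A (e t) + b t) :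
    ∑ t ∈ range (T + 1), e t ≤ A (∑ t ∈ range T, e t) + ∑ t ∈ range T, b t + e 0 := by
  rw [sum_range_succ', map_sum, ← sum_add_distrib]
  gcongr with t ht
  exact hrec t (mem_range.mp ht)

theorem mulVec_le_mulVec_of_nonneg {m n R : Type*} [Fintype n] [Semiring R] [PartialOrder R]
    [IsOrderedRing R] {M : Matrix m n R} (hM : ∀ i j, 0 ≤ M i j) {x y : n → R} (hxy : x ≤ y) :
    M *ᵥ x ≤ M *ᵥ y :=
  fun i => dotProduct_le_dotProduct_of_nonneg_left hxy (hM i)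

section OrderedCommRing

variable {n R : Type*} [Fintype n] [DecidableEq n] [CommRing R] [PartialOrder R] [IsOrderedRing R]

theorem le_inv_mulVec_of_mulVec_le {M : Matrix n n R} (hunit : IsUnit M.det)
    (hinv : ∀ i j, 0 ≤ M⁻¹ i j) {x y : n → R} (hxy : M *ᵥ x ≤ y) : x ≤ M⁻¹ *ᵥ y :=
  calc
    x = M⁻¹ *ᵥ (M *ᵥ x) := by rw [mulVec_mulVec, nonsing_inv_mul M hunit, one_mulVec]
    _ ≤ M⁻¹ *ᵥ y := mulVec_le_mulVec_of_nonneg hinv hxy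

theorem one_sub_mulVec_sum_range_succ_le {G : Matrix n n R} (hG : ∀ i j, 0 ≤ G i j)
    {e b : ℕ → n → R} {T : ℕ} (heT : 0 ≤ e T)
    (hrec : ∀ t < T, e (t + 1) ≤ G *ᵥ e t + b t) :
    (1 - G) *ᵥ ∑ t ∈ range (T + 1), e t ≤ e 0 + ∑ t ∈ range T, b t := by
  have hsum_le : ∑ t ∈ range T, e t ≤ ∑ t ∈ range (T + 1), e t := by
    rw [sum_range_succ]
    exact le_add_of_nonneg_right heT
  rw [sub_mulVec, one_mulVec, sub_le_iff_le_add]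
  calc
    ∑ t ∈ range (T + 1), e t
      ≤ G *ᵥ ∑ t ∈ range T, e t + ∑ t ∈ range T, b t + e 0 :=
        sum_range_succ_le_of_succ_le_map_add G.mulVecLin.toAddMonoidHom hrec
    _ ≤ G *ᵥ ∑ t ∈ range (T + 1), e t + ∑ t ∈ range T, b t + e 0 := by
        gcongr
        exact mulVec_le_mulVec_of_nonneg hG hsum_le
    _ = e 0 + ∑ t ∈ range T, b t + G *ᵥ ∑ t ∈ range (T + 1), e t := by abel

theorem linear_system_sum_bound_general {G : Matrix n n R} (hG : ∀ i j, 0 ≤ G i j)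
    (hunit : IsUnit (1 - G).det) (hinv : ∀ i j, 0 ≤ (1 - G)⁻¹ i j)
    {e b : ℕ → n → R} {T : ℕ} (heT : 0 ≤ e T)
    (hrec : ∀ t < T, e (t + 1) ≤ G *ᵥ e t + b t) :
    ∑ t ∈ range (T + 1), e t ≤ (1 - G)⁻¹ *ᵥ (e 0 + ∑ t ∈ range T, b t) :=
  le_inv_mulVec_of_mulVec_le hunit hinv (one_sub_mulVec_sum_range_succ_le hG heT hrec)

end OrderedCommRing

/-- Summing a linear-system recursion.
Let `G ∈ ℝ^{m×m}` have nonnegative entries, with `I − G` invertible and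
`(I − G)⁻¹` entrywise nonnegative. If `e, b : ℕ → ℝ^m` are entrywise
nonnegative, `e(0) = 0` and `e(t+1) ≤ G e(t) + b(t)` entrywise, then for every
`T ≥ 1`, `Σ_{t=1}^T e(t) ≤ (I − G)⁻¹ Σ_{t=0}^{T−1} b(t)` entrywise. -/
theorem linear_system_sum_bound {m : ℕ}
    (G : Matrix (Fin m) (Fin m) ℝ)
    (hG : ∀ i j, 0 ≤ G i j)
    (hunit : IsUnit (1 - G).det)
    (hinv : ∀ i j, 0 ≤ (1 - G)⁻¹ i j)
    (e b : ℕ → Fin m → ℝ)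
    (he0 : e 0 = 0)
    (he : ∀ t i, 0 ≤ e t i) (hb : ∀ t i, 0 ≤ b t i)
    (hrec : ∀ t i, e (t + 1) i ≤ G.mulVec (e t) i + b t i)
    (T : ℕ) (hT : 1 ≤ T) :
    ∀ i, ∑ t ∈ Finset.Icc 1 T, e t i
      ≤ (1 - G)⁻¹.mulVec (∑ t ∈ Finset.range T, b t) i := by
  simpa [sum_range_eq_add_Ico, Ico_add_one_right_eq_Icc, he0, Pi.le_def] using
    linear_system_sum_bound_general hG hunit hinv (he T) fun t _ => hrec t
end
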